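/- Let K be a nonempty finite type, d a natural number, t : K → (Fin d → ℝ), and η ∈ (Fin d → ℝ). Define p : K → ℝ by p(x) = exp(⟨η, t(x)⟩) / ∑_{y ∈ K} exp(⟨η, t(y)⟩). Let q : K → ℝ satisfy q(x) ≥ 0 for all x, ∑_{x} q(x) = 1, and ∑_{x} q(x) • t(x) = ∑_{x} p(x) • t(x). Then the cross entropy of q relative to p equals the entropy of p: −∑_{x} q(x) log p(x) = −∑_{x} p(x) log p(x). -/

import Mathlib

open Real

/-- The probability mass function on `K` proportional to `exp ∘ f`. The member with canonical
parameter `η` of the exponential family with uniform base and canonical statistic `t` is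
`softmax fun x => ⟨η, t x⟩`. -/
noncomputable def softmax {K : Type*} [Fintype K] (f : K → ℝ) (x : K) : ℝ :=
  exp (f x) / ∑ y, exp (f y)

theorem sum_exp_pos {K : Type*} [Fintype K] [Nonempty K] (f : K → ℝ) : 0 < ∑ x, exp (f x) :=
  Finset.sum_pos (fun x _ => exp_pos (f x)) Finset.univ_nonempty

theorem sum_softmax {K : Type*} [Fintype K] [Nonempty K] (f : K → ℝ) : ∑ x, softmax f x = 1 := by
  simp only [softmax, ← Finset.sum_div, div_self (sum_exp_pos f).ne']

theorem log_softmax {K : Type*} [Fintype K] (f : K → ℝ) (x : K) :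
    log (softmax f x) = f x - log (∑ y, exp (f y)) := by
  have : Nonempty K := ⟨x⟩
  rw [softmax, log_div (exp_pos _).ne' (sum_exp_pos f).ne', log_exp]

theorem sum_smul_map_sub_const {ι R E F : Type*} [Semiring R] [AddCommMonoid E] [Module R E]
    [AddCommGroup F] [Module R F] (s : Finset ι) (w : ι → R) (t : ι → E) (φ : E →ₗ[R] F) (c : F) :
    ∑ x ∈ s, w x • (φ (t x) - c) = φ (∑ x ∈ s, w x • t x) - (∑ x ∈ s, w x) • c := by
  simp only [smul_sub, Finset.sum_sub_distrib, map_sum, map_smul, Finset.sum_smul]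

section Moment

variable {K E : Type*} [Fintype K] [AddCommMonoid E] [Module ℝ E]

theorem sum_mul_log_softmax (t : K → E) (η : Module.Dual ℝ E) (q : K → ℝ) :
    ∑ x, q x * log (softmax (fun y => η (t y)) x) =
      η (∑ x, q x • t x) - (∑ x, q x) * log (∑ y, exp (η (t y))) := by
  simp only [log_softmax]
  exact sum_smul_map_sub_const Finset.univ q t η _

theorem efu_cross_entropy_eq_entropy_general (t : K → E) (η : Module.Dual ℝ E)
    (p : K → ℝ) (hp : p = softmax fun x => η (t x)) (q : K → ℝ) (hq1 : ∑ x, q x = 1)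
    (hmom : ∑ x, q x • t x = ∑ x, p x • t x) :
    -∑ x, q x * log (p x) = -∑ x, p x * log (p x) := by
  subst hp
  have : Nonempty K := Finset.univ_nonempty_iff.mp <|
    Finset.nonempty_of_sum_ne_zero (hq1.trans_ne one_ne_zero)
  rw [sum_mul_log_softmax, sum_mul_log_softmax, hmom, hq1, sum_softmax]

end Moment

/-- For an exponential family with uniform base, the cross entropy of any probability
mass function `q` with the same expectation of `t` relative to `p` equals the Shannon
entropy of `p`: `H(q,p) = H(p)`. -/
theorem efu_cross_entropy_eq_entropy
    {K : Type*} [Fintype K] [Nonempty K]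
    (d : ℕ) (t : K → (Fin d → ℝ)) (η : Fin d → ℝ)
    (p : K → ℝ)
    (hp : p = fun x => Real.exp (∑ i, η i * t x i) / ∑ y, Real.exp (∑ i, η i * t y i))
    (q : K → ℝ) (hq0 : ∀ x, 0 ≤ q x) (hq1 : ∑ x, q x = 1)
    (hmom : ∑ x, q x • t x = ∑ x, p x • t x) :
    -∑ x, q x * Real.log (p x) = -∑ x, p x * Real.log (p x) := by
  exact efu_cross_entropy_eq_entropy_general t (dotProductBilin ℝ ℝ η) p hp q hq1 hmom
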